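/- For every d ∈ ℤ, the map f_d : S^1 → S^1, f_d(z) = z^d, satisfies ∬_{S^1×S^1} |x^d − y^d|^2 / |x − y|^2 dσ(x) dσ(y) = 4π^2·|d|; that is, |f_d|_{W^{1/2,2}}^2 = 4π^2·|d|. -/

import Mathlib

open MeasureTheory
open scoped ENNReal

noncomputable section

/-- Arc-length measure on the unit circle, realized as a measure on ℂ:
the pushforward of Lebesgue measure on `[0, 2π)` under `θ ↦ exp (θ i)`. -/
def circleMeasure : Measure ℂ :=
  Measure.map (fun θ : ℝ => Complex.exp (θ * Complex.I))
    (volume.restrict (Set.Ico 0 (2 * Real.pi)))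

/-- The unit circle `S¹ ⊆ ℂ`. -/
def unitCircle : Set ℂ := Metric.sphere (0 : ℂ) 1

end

lemma aux_int (m : ℤ) : ∫ θ in (0:ℝ)..(2*Real.pi), Complex.exp (θ * Complex.I) ^ m
    = if m = 0 then ((2*Real.pi : ℝ) : ℂ) else 0 := by
  split_ifs with h
  · subst h; simp
  · have hm : ((m:ℂ) * Complex.I) ≠ 0 := by simp [h]
    have h1 : ∀ θ : ℝ, Complex.exp (θ * Complex.I) ^ m = Complex.exp ((m * Complex.I) * θ) := by
      intro θ
      rw [← Complex.exp_int_mul]; congr 1; ring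
    simp_rw [h1]
    rw [integral_exp_mul_complex hm]
    have h2 : Complex.exp ((m:ℂ) * Complex.I * ((2 * Real.pi : ℝ) : ℂ)) = 1 := by
      rw [Complex.exp_eq_one_iff]; exact ⟨m, by push_cast; ring⟩
    rw [h2]; simp

lemma aux_conj {x : ℂ} (hx : ‖x‖ = 1) : (starRingEnd ℂ) x = x⁻¹ := by
  rw [Complex.inv_def, Complex.normSq_eq_norm_sq, hx]; simp

lemma aux_parseval (n : ℕ) (c : ℕ → ℂ) (hc : ∀ k, ‖c k‖ = 1) :
    ∫ θ in (0:ℝ)..(2*Real.pi), ‖∑ k ∈ Finset.range n, Complex.exp (θ * Complex.I) ^ k * c k‖ ^ 2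
      = 2 * Real.pi * n := by
  apply Complex.ofReal_injective
  rw [← intervalIntegral.integral_ofReal]
  have h1 : ∀ θ : ℝ, (((‖∑ k ∈ Finset.range n, Complex.exp (θ * Complex.I) ^ k * c k‖ ^ 2 : ℝ)) : ℂ)
      = ∑ k ∈ Finset.range n, ∑ l ∈ Finset.range n,
        Complex.exp (θ * Complex.I) ^ ((k:ℤ) - l) * (c k * (c l)⁻¹) := by
    intro θ
    rw [← Complex.normSq_eq_norm_sq, ← Complex.mul_conj, map_sum, Finset.sum_mul_sum]
    refine Finset.sum_congr rfl fun k _ => Finset.sum_congr rfl fun l _ => ?_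
    rw [map_mul, map_pow, aux_conj (hc l), aux_conj (Complex.norm_exp_ofReal_mul_I θ),
      zpow_sub₀ (Complex.exp_ne_zero _), zpow_natCast, zpow_natCast, inv_pow]
    ring
  simp_rw [h1]
  have hcont : ∀ (m : ℤ) , Continuous fun θ : ℝ => Complex.exp (θ * Complex.I) ^ m := by
    intro m
    have h1 : ∀ θ : ℝ, Complex.exp (θ * Complex.I) ^ m = Complex.exp ((m * Complex.I) * θ) := by
      intro θ
      rw [← Complex.exp_int_mul]; congr 1; ring
    simp_rw [h1]; fun_prop
  have hint : ∀ (m : ℤ) (a : ℂ), IntervalIntegrable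
      (fun θ : ℝ => Complex.exp (θ * Complex.I) ^ m * a) volume 0 (2*Real.pi) :=
    fun m a => ((hcont m).mul continuous_const).intervalIntegrable _ _
  rw [intervalIntegral.integral_finsetSum]
  swap
  · intro k _
    exact (continuous_finsetSum _ fun l _ =>
      (hcont _).mul continuous_const).intervalIntegrable _ _
  have h2 : ∀ k ∈ Finset.range n, ∫ θ in (0:ℝ)..(2*Real.pi), ∑ l ∈ Finset.range n,
        Complex.exp (θ * Complex.I) ^ ((k:ℤ) - l) * (c k * (c l)⁻¹) = ((2*Real.pi : ℝ) : ℂ) := by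
    intro k hk
    rw [intervalIntegral.integral_finsetSum (fun l _ => hint _ _)]
    simp_rw [intervalIntegral.integral_mul_const, aux_int]
    rw [Finset.sum_eq_single k]
    · have : c k ≠ 0 := fun h => by simpa [h] using hc k
      simp [this]
    · intro l _ hl
      rw [if_neg (by omega)]; simp
    · intro h; exact absurd hk h
  rw [Finset.sum_congr rfl h2]
  simp; ring

lemma aux_inj {a b : ℝ} (ha : a ∈ Set.Ico 0 (2 * Real.pi)) (hb : b ∈ Set.Ico 0 (2 * Real.pi))
    (h : Complex.exp (a * Complex.I) = Complex.exp (b * Complex.I)) : a = b := by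
  rw [Complex.exp_eq_exp_iff_exists_int] at h
  obtain ⟨m, hm⟩ := h
  have h1 : (a:ℂ) = b + m * (2 * Real.pi) := by
    apply mul_right_cancel₀ Complex.I_ne_zero
    rw [hm]; ring
  have h2 : a = b + m * (2 * Real.pi) := by exact_mod_cast h1
  have hp := Real.pi_pos
  have h3 : m = 0 := by
    have : (m:ℝ) < 1 := by
      by_contra! hh; nlinarith [ha.2, hb.1]
    have h' : (-1:ℝ) < m := by
      by_contra! hh; nlinarith [ha.1, hb.2]
    have : m < 1 := by exact_mod_cast this
    have : -1 < m := by exact_mod_cast h'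
    omega
  subst h3; simpa using h2

lemma aux_pt (n : ℕ) {x y : ℂ} (hxy : x ≠ y) :
    ‖x ^ n - y ^ n‖ ^ 2 / ‖x - y‖ ^ 2 =
      ‖∑ k ∈ Finset.range n, x ^ k * y ^ (n - 1 - k)‖ ^ 2 := by
  have h0 : ‖x - y‖ ^ 2 ≠ 0 := by simpa [sub_eq_zero] using hxy
  rw [div_eq_iff h0, ← Commute.geom_sum₂_mul (Commute.all x y), norm_mul, mul_pow]

lemma aux_inner (n : ℕ) {y : ℂ} (hy : ‖y‖ = 1) :
    ∫⁻ x, ENNReal.ofReal (‖x ^ n - y ^ n‖ ^ 2 / ‖x - y‖ ^ 2) ∂circleMeasure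
      = ENNReal.ofReal (2 * Real.pi * n) := by
  unfold circleMeasure
  rw [lintegral_map (by fun_prop) (by fun_prop)]
  have hp := Real.pi_pos
  have hne : ∀ᵐ θ : ℝ ∂(volume.restrict (Set.Ico 0 (2 * Real.pi))),
      Complex.exp (θ * Complex.I) ≠ y := by
    by_cases h : ∃ b ∈ Set.Ico 0 (2 * Real.pi), Complex.exp ((b:ℝ) * Complex.I) = y
    · obtain ⟨b, hb, rfl⟩ := h
      filter_upwards [ae_restrict_mem measurableSet_Ico,
        ae_restrict_of_ae (Measure.ae_ne volume b)] with a ha hab he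
      exact hab (aux_inj ha hb he)
    · push Not at h
      filter_upwards [ae_restrict_mem measurableSet_Ico] with a ha
      exact h a ha
  rw [lintegral_congr_ae (g := fun θ : ℝ => ENNReal.ofReal
    (‖∑ k ∈ Finset.range n, Complex.exp (θ * Complex.I) ^ k * y ^ (n - 1 - k)‖ ^ 2))]
  · rw [← aux_parseval n (fun k => y ^ (n - 1 - k)) (by simp [hy]),
      intervalIntegral.integral_of_le (by positivity), ← integral_Ico_eq_integral_Ioc,
      ofReal_integral_eq_lintegral_ofReal]
    · refine (Continuous.integrableOn_Icc ?_).mono_set Set.Ico_subset_Icc_self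
      fun_prop
    · exact Filter.Eventually.of_forall fun _ => by positivity
  · filter_upwards [hne] with θ h
    rw [aux_pt n h]

lemma aux_sphere : ∀ᵐ y ∂circleMeasure, ‖y‖ = 1 := by
  unfold circleMeasure
  rw [ae_map_iff (by fun_prop) (measurableSet_eq_fun (by fun_prop) (by fun_prop))]
  exact Filter.Eventually.of_forall fun θ => Complex.norm_exp_ofReal_mul_I θ

lemma aux_mass : circleMeasure Set.univ = ENNReal.ofReal (2 * Real.pi) := by
  unfold circleMeasure
  rw [Measure.map_apply (by fun_prop) MeasurableSet.univ]
  simp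

lemma aux_neg {x y : ℂ} (hx : ‖x‖ = 1) (hy : ‖y‖ = 1) (d : ℤ) :
    ‖x ^ d - y ^ d‖ = ‖x ^ d.natAbs - y ^ d.natAbs‖ := by
  rcases Int.natAbs_eq d with h | h
  · conv_lhs => rw [h, zpow_natCast, zpow_natCast]
  · conv_lhs => rw [h, zpow_neg, zpow_neg, zpow_natCast, zpow_natCast, ← inv_pow, ← inv_pow,
      ← aux_conj hx, ← aux_conj hy, ← map_pow, ← map_pow, ← map_sub, Complex.norm_conj]

/-- For every `d ∈ ℤ`, the map `z ↦ z^d` on `S¹` satisfies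
`∬_{S¹×S¹} |x^d - y^d|² / |x - y|² dσ(x) dσ(y) = 4π² |d|`. -/
theorem energy_of_power_map (d : ℤ) :
    (∫⁻ q : ℂ × ℂ, ENNReal.ofReal (‖q.1 ^ d - q.2 ^ d‖ ^ 2 / ‖q.1 - q.2‖ ^ 2)
        ∂(circleMeasure.prod circleMeasure)) =
      ENNReal.ofReal (4 * Real.pi ^ 2 * (|d| : ℝ)) := by
  haveI : IsFiniteMeasure circleMeasure := ⟨by rw [aux_mass]; exact ENNReal.ofReal_lt_top⟩
  rw [lintegral_prod_symm]
  · rw [lintegral_congr_ae (g := fun _ => ENNReal.ofReal (2 * Real.pi * d.natAbs))]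
    · rw [lintegral_const, aux_mass, ← ENNReal.ofReal_mul (by positivity), Nat.cast_natAbs]
      congr 1
      push_cast
      ring
    · filter_upwards [aux_sphere] with y hy
      rw [← aux_inner d.natAbs hy]
      apply lintegral_congr_ae
      filter_upwards [aux_sphere] with x hx
      simp only [aux_neg hx hy d]
  · apply Measurable.aemeasurable
    have h : Measurable fun z : ℂ => z ^ d := by
      cases d with
      | ofNat n => simp only [Int.ofNat_eq_natCast, zpow_natCast]; fun_prop
      | negSucc n => simp only [zpow_negSucc]; fun_prop
    have h1 : Measurable fun q : ℂ × ℂ => q.1 ^ d := h.comp measurable_fst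
    have h2 : Measurable fun q : ℂ × ℂ => q.2 ^ d := h.comp measurable_snd
    fun_prop
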